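/- arXiv:1604.02049 — 4 statements merged into one kernel-verified Lean document; each statement's English description precedes it below -/
import Mathlib

section
/- For every subset E of ℝ⁺ there exist subsets S and Q of ℝ⁺ such that E = S ∪ Q and p̄(S) = p̄(Q) = 1 (i.e., both S and Q are strongly porous at 0). -/
/-!
The points `1 / n!` cut a right neighbourhood of `0` into consecutive blocks
`[1 / (n+1)!, 1 / n!)`. The ratio of the endpoints of a block tends to `0`, so a set avoiding
infinitely many blocks is strongly porous at `0` (`upperPorosity_eq_one_of_gaps`). Put the points
of `E` lying in blocks of even index into `Q` and the remaining points of `E` into `S`: then `Q`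
avoids every block of odd index and `S` every block of even index.
-/

open Filter Set

/-- `gapLength E h` = λ(E,h): the length of the largest open subinterval of (0,h)
containing no point of `E` (0 if no such interval exists). -/
noncomputable def gapLength (E : Set ℝ) (h : ℝ) : ℝ :=
  sSup {l : ℝ | ∃ a b : ℝ, 0 ≤ a ∧ a ≤ b ∧ b ≤ h ∧ Set.Ioo a b ∩ E = ∅ ∧ l = b - a}

/-- The right upper porosity of `E` at 0. -/
noncomputable def upperPorosity (E : Set ℝ) : ℝ :=
  Filter.limsup (fun h => gapLength E h / h) (nhdsWithin (0:ℝ) (Set.Ioi 0))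

/-- The right lower porosity of `E` at 0. -/
noncomputable def lowerPorosity (E : Set ℝ) : ℝ :=
  Filter.liminf (fun h => gapLength E h / h) (nhdsWithin (0:ℝ) (Set.Ioi 0))

/-- `UMP E`: sequences of positive reals tending to 0 along which the upper limit
in the definition of porosity is attained. -/
def UMP (E : Set ℝ) : Set (ℕ → ℝ) :=
  {h | (∀ n, 0 < h n) ∧ Filter.Tendsto h Filter.atTop (nhds 0) ∧
    Filter.Tendsto (fun n => gapLength E (h n) / h n) Filter.atTop (nhds (upperPorosity E))}

/-- The set of all strongly porous at 0 subsets of ℝ⁺. -/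
def SP : Set (Set ℝ) := {E | E ⊆ Set.Ici 0 ∧ upperPorosity E = 1}

/-- `I` is an ideal on the set `X`. -/
def IsIdealOn (X : Set ℝ) (I : Set (Set ℝ)) : Prop :=
  I.Nonempty ∧ (∀ B ∈ I, B ⊆ X) ∧ (∀ B ∈ I, ∀ C : Set ℝ, C ⊆ B → C ∈ I) ∧
    (∀ B ∈ I, ∀ C ∈ I, B ∪ C ∈ I) ∧ X ∉ I

/-- `I` is a `Γ`-maximal ideal on `X`. -/
def IsMaximalIdealIn (X : Set ℝ) (Γ I : Set (Set ℝ)) : Prop :=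
  IsIdealOn X I ∧ I ⊆ Γ ∧ ∀ J : Set (Set ℝ), IsIdealOn X J → I ⊆ J → J ⊆ Γ → I = J

/-- `Î(SP)`: the intersection of all SP-maximal ideals on ℝ⁺. -/
def hatISP : Set (Set ℝ) :=
  {A | ∀ I : Set (Set ℝ), IsMaximalIdealIn (Set.Ici 0) SP I → A ∈ I}

/-- The q-blow up `E(q)` of a set `E ⊆ ℝ⁺`. -/
def blowUp (E : Set ℝ) (q : ℝ) : Set ℝ := ⋃ x ∈ E, Set.Ioo (q⁻¹ * x) (q * x)

lemma gapLength_set_bddAbove (E : Set ℝ) (h : ℝ) :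
    BddAbove {l : ℝ | ∃ a b : ℝ, 0 ≤ a ∧ a ≤ b ∧ b ≤ h ∧ Set.Ioo a b ∩ E = ∅ ∧ l = b - a} := by
  refine ⟨h, ?_⟩
  rintro l ⟨a, b, ha, -, hb, -, rfl⟩
  linarith

lemma gapLength_le (E : Set ℝ) {h : ℝ} (hh : 0 ≤ h) : gapLength E h ≤ h := by
  refine Real.sSup_le ?_ hh
  rintro l ⟨a, b, ha, -, hb, -, rfl⟩
  linarith

lemma gapLength_nonneg (E : Set ℝ) (h : ℝ) : 0 ≤ gapLength E h := by
  refine Real.sSup_nonneg ?_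
  rintro l ⟨a, b, -, hab, -, -, rfl⟩
  linarith

lemma sub_le_gapLength (E : Set ℝ) {a h : ℝ} (ha : 0 ≤ a) (hah : a ≤ h)
    (hE : Set.Ioo a h ∩ E = ∅) : h - a ≤ gapLength E h :=
  le_csSup (gapLength_set_bddAbove E h) ⟨a, h, ha, hah, le_rfl, hE, rfl⟩

/-- A set with gaps `(c n, b n)` such that `b n → 0` and `c n / b n → 0` is strongly porous
at `0`. -/
lemma upperPorosity_eq_one_of_gaps (E : Set ℝ) (b c : ℕ → ℝ) (hb : ∀ n, 0 < b n)
    (hc : ∀ n, 0 ≤ c n) (hcb : ∀ n, c n ≤ b n) (hb0 : Tendsto b atTop (nhds 0))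
    (hcb0 : Tendsto (fun n => c n / b n) atTop (nhds 0))
    (hE : ∀ n, Set.Ioo (c n) (b n) ∩ E = ∅) : upperPorosity E = 1 := by
  have hle : ∀ᶠ h in nhdsWithin (0:ℝ) (Set.Ioi 0), gapLength E h / h ≤ 1 := by
    filter_upwards [self_mem_nhdsWithin] with h hh
    exact div_le_one_of_le₀ (gapLength_le E (le_of_lt hh)) (le_of_lt hh)
  have hge : ∀ᶠ h in nhdsWithin (0:ℝ) (Set.Ioi 0), 0 ≤ gapLength E h / h := by
    filter_upwards [self_mem_nhdsWithin] with h hh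
    exact div_nonneg (gapLength_nonneg E h) (le_of_lt hh)
  have hbw : Tendsto b atTop (nhdsWithin (0:ℝ) (Set.Ioi 0)) :=
    tendsto_nhdsWithin_iff.2 ⟨hb0, Eventually.of_forall hb⟩
  refine le_antisymm ?_ ?_
  · exact limsup_le_of_le (isBoundedUnder_of_eventually_ge hge).isCoboundedUnder_le hle
  · refine le_of_forall_lt fun y hy => ?_
    obtain ⟨z, hyz, hz⟩ := exists_between hy
    refine hyz.trans_le
      (le_limsup_of_frequently_le ?_ (isBoundedUnder_of_eventually_le hle))
    refine hbw.frequently (Eventually.frequently ?_)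
    filter_upwards [hcb0.eventually_lt_const (sub_pos.2 hz)] with n hn
    have h1 := sub_le_gapLength E (hc n) (hcb n) (hE n)
    rw [div_lt_iff₀ (hb n)] at hn
    rw [le_div_iff₀ (hb n)]
    linarith

/-- The endpoints of the blocks. -/
noncomputable def blockEnd (n : ℕ) : ℝ := 1 / (n.factorial : ℝ)

lemma blockEnd_pos (n : ℕ) : 0 < blockEnd n :=
  one_div_pos.2 (Nat.cast_pos.2 n.factorial_pos)

lemma blockEnd_antitone : Antitone blockEnd := fun m _ hmn =>
  one_div_le_one_div_of_le (Nat.cast_pos.2 m.factorial_pos)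
    (Nat.cast_le.2 (Nat.factorial_le hmn))

lemma blockEnd_succ_div (n : ℕ) : blockEnd (n + 1) / blockEnd n = 1 / ((n : ℝ) + 1) := by
  have : (n.factorial : ℝ) ≠ 0 := Nat.cast_ne_zero.2 n.factorial_ne_zero
  have : (n : ℝ) + 1 ≠ 0 := n.cast_add_one_ne_zero
  simp only [blockEnd, Nat.factorial_succ]
  push_cast
  field_simp

lemma tendsto_blockEnd_zero : Tendsto blockEnd atTop (nhds 0) := by
  refine squeeze_zero' (Eventually.of_forall fun n => (blockEnd_pos n).le) ?_
    (tendsto_const_div_atTop_nhds_zero_nat 1)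
  filter_upwards [eventually_gt_atTop 0] with n hn
  exact one_div_le_one_div_of_le (Nat.cast_pos.2 hn) (Nat.cast_le.2 n.self_le_factorial)

lemma upperPorosity_eq_one_of_blocks (E : Set ℝ) (k : ℕ → ℕ) (hk : Tendsto k atTop atTop)
    (hE : ∀ n, Set.Ioo (blockEnd (k n + 1)) (blockEnd (k n)) ∩ E = ∅) : upperPorosity E = 1 := by
  refine upperPorosity_eq_one_of_gaps E (fun n => blockEnd (k n)) (fun n => blockEnd (k n + 1))
    (fun n => blockEnd_pos _) (fun n => (blockEnd_pos _).le)
    (fun n => blockEnd_antitone (Nat.le_succ _)) (tendsto_blockEnd_zero.comp hk) ?_ hE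
  simp only [blockEnd_succ_div]
  exact tendsto_one_div_add_atTop_nhds_zero_nat.comp hk

theorem stmt0 (E : Set ℝ) (hE : E ⊆ Set.Ici 0) :
    ∃ S Q : Set ℝ, S ⊆ Set.Ici 0 ∧ Q ⊆ Set.Ici 0 ∧ E = S ∪ Q ∧
      upperPorosity S = 1 ∧ upperPorosity Q = 1 := by
  let A : Set ℝ := {x | ∃ n : ℕ, blockEnd (2 * n + 1) ≤ x ∧ x < blockEnd (2 * n)}
  refine ⟨E \ A, E ∩ A, sdiff_subset.trans hE, inter_subset_left.trans hE,
    (sdiff_union_inter E A).symm, ?_, ?_⟩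
  · refine upperPorosity_eq_one_of_blocks _ (fun n => 2 * n)
      (tendsto_atTop_mono (fun n => by rw [id]; omega) tendsto_id) fun n => ?_
    refine eq_empty_iff_forall_notMem.2 ?_
    rintro x ⟨⟨h1, h2⟩, -, hx⟩
    exact hx ⟨n, h1.le, h2⟩
  · refine upperPorosity_eq_one_of_blocks _ (fun n => 2 * n + 1)
      (tendsto_atTop_mono (fun n => by rw [id]; omega) tendsto_id) fun n => ?_
    refine eq_empty_iff_forall_notMem.2 ?_
    rintro x ⟨⟨h1, h2⟩, -, m, h3, h4⟩
    have h5 : 2 * n + 1 < 2 * m + 1 := blockEnd_antitone.reflect_lt (h3.trans_lt h2)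
    have h6 : 2 * m < 2 * n + 1 + 1 := blockEnd_antitone.reflect_lt (h1.trans h4)
    omega
end

section
/- For every A ⊆ ℝ⁺ there is a countable coherently porous family {A_n : n ∈ ℕ} of strongly porous at 0 subsets of ℝ⁺ such that A = ⋃_{n∈ℕ} A_n. -/
/-!
Put `B n = {x ∈ A | x = 0 ∨ 1 / (n + 1) ≤ x}`. These sets exhaust `A`, and `B n` has no point in
`(0, 1 / (n + 1))`, so the relative gap length `gapLength (B n) h / h` is identically `1` for small
`h > 0`. Hence each `B n` is strongly porous at `0`, and every sequence of positive reals tending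
to `0` (for instance `1 / (k + 1)`) belongs to all the sets `UMP (B n)` at once.
-/


open Filter Set

lemma gapLength_eq_self {E : Set ℝ} {h : ℝ} (hh : 0 ≤ h) (hE : Set.Ioo 0 h ∩ E = ∅) :
    gapLength E h = h := by
  apply IsGreatest.csSup_eq
  refine ⟨⟨0, h, le_rfl, hh, le_rfl, hE, by ring⟩, ?_⟩
  rintro l ⟨a, b, ha, -, hb, -, rfl⟩
  linarith

lemma eventually_gapLength_div_eq_one {E : Set ℝ} {δ : ℝ} (hδ : 0 < δ)
    (hE : ∀ x ∈ E, x = 0 ∨ δ ≤ x) :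
    (fun h => gapLength E h / h) =ᶠ[nhdsWithin (0 : ℝ) (Set.Ioi 0)] fun _ => 1 := by
  filter_upwards [Ioo_mem_nhdsGT hδ] with h hh
  rw [gapLength_eq_self hh.1.le, div_self hh.1.ne']
  ext x
  simp only [mem_inter_iff, mem_Ioo, mem_empty_iff_false, iff_false]
  rintro ⟨⟨h0, hx⟩, hxE⟩
  rcases hE x hxE with h1 | h1 <;> linarith [hh.2]

lemma upperPorosity_eq_one {E : Set ℝ} {δ : ℝ} (hδ : 0 < δ) (hE : ∀ x ∈ E, x = 0 ∨ δ ≤ x) :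
    upperPorosity E = 1 := by
  rw [upperPorosity, limsup_congr (eventually_gapLength_div_eq_one hδ hE), limsup_const]

theorem stmt7 (A : Set ℝ) (hA : A ⊆ Set.Ici 0) :
    ∃ B : ℕ → Set ℝ, (∀ n, B n ⊆ Set.Ici 0) ∧ (∀ n, upperPorosity (B n) = 1) ∧
      (⋂ n, UMP (B n)).Nonempty ∧ A = ⋃ n, B n := by
  have hδ (n : ℕ) : (0 : ℝ) < 1 / (n + 1) := Nat.one_div_pos_of_nat
  have hB (n : ℕ) : ∀ x ∈ {x ∈ A | x = 0 ∨ 1 / ((n : ℝ) + 1) ≤ x},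
      x = 0 ∨ 1 / ((n : ℝ) + 1) ≤ x := fun x hx => hx.2
  refine ⟨fun n => {x ∈ A | x = 0 ∨ 1 / ((n : ℝ) + 1) ≤ x}, fun n x hx => hA hx.1,
    fun n => upperPorosity_eq_one (hδ n) (hB n),
    ⟨fun k => 1 / ((k : ℝ) + 1), mem_iInter.2 fun n =>
      ⟨hδ, tendsto_one_div_add_atTop_nhds_zero_nat, ?_⟩⟩, ?_⟩
  · rw [upperPorosity_eq_one (hδ n) (hB n)]
    have ht : Tendsto (fun k : ℕ => 1 / ((k : ℝ) + 1)) atTop (nhdsWithin 0 (Set.Ioi 0)) :=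
      tendsto_nhdsWithin_iff.2
        ⟨tendsto_one_div_add_atTop_nhds_zero_nat, Eventually.of_forall hδ⟩
    exact (tendsto_const_nhds.congr'
      (eventually_gapLength_div_eq_one (hδ n) (hB n)).symm).comp ht
  · ext x
    simp only [mem_iUnion, mem_ofPred_eq]
    refine ⟨fun hx => ?_, fun ⟨_, hx⟩ => hx.1⟩
    rcases (show 0 ≤ x from hA hx).eq_or_lt with h0 | h0
    · exact ⟨0, hx, Or.inl h0.symm⟩
    · obtain ⟨n, hn⟩ := exists_nat_one_div_lt h0
      exact ⟨n, hx, Or.inr hn.le⟩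
end

section
/- Let I be an SP-maximal ideal on ℝ⁺ and let q > 1. Then E(q) ∈ I holds for every E ∈ I. -/
/-!
Strong porosity of `E` at `0` means that `E` has arbitrarily small gaps `(a, b)` with `a / b`
arbitrarily small (`upperPorosity_eq_one_iff`). Passing from `A` to `A ∪ A(q)` shrinks such a gap
only to `(q a, b / q)`, which multiplies `a / b` by the constant `q ^ 2`, so `A ∪ A(q)` is still
strongly porous (`mem_SP_of_subset_union_blowUp`). Hence the sets covered by some `A ∪ A(q)` with
`A ∈ I` form an ideal that contains `I` and is contained in `SP`. By maximality this ideal is `I`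
itself, and it contains `E(q)` for every `E ∈ I`.
-/

open Filter Set

theorem zero_mem_gaps (E : Set ℝ) {h : ℝ} (hh : 0 < h) :
    (0 : ℝ) ∈ {l : ℝ | ∃ a b : ℝ, 0 ≤ a ∧ a ≤ b ∧ b ≤ h ∧ Set.Ioo a b ∩ E = ∅ ∧ l = b - a} :=
  ⟨0, 0, le_rfl, le_rfl, hh.le, by simp, by simp⟩

theorem gaps_le (E : Set ℝ) {h l : ℝ}
    (hl : l ∈ {l : ℝ | ∃ a b : ℝ, 0 ≤ a ∧ a ≤ b ∧ b ≤ h ∧ Set.Ioo a b ∩ E = ∅ ∧ l = b - a}) :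
    l ≤ h := by
  obtain ⟨a, b, h1, h2, h3, -, rfl⟩ := hl
  linarith

theorem gapLength_div_mem_Icc (E : Set ℝ) {h : ℝ} (hh : 0 < h) :
    gapLength E h / h ∈ Set.Icc (0 : ℝ) 1 :=
  ⟨div_nonneg (le_csSup ⟨h, fun _ => gaps_le E⟩ (zero_mem_gaps E hh)) hh.le,
    (div_le_one hh).2 (csSup_le ⟨0, zero_mem_gaps E hh⟩ fun _ => gaps_le E)⟩

theorem upperPorosity_eq_one_iff (E : Set ℝ) : upperPorosity E = 1 ↔
    ∀ ε > 0, ∀ δ > 0, ∃ a b : ℝ, 0 ≤ a ∧ a < ε * b ∧ 0 < b ∧ b < δ ∧ Set.Ioo a b ∩ E = ∅ := by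
  have hev : ∀ᶠ h in nhdsWithin (0 : ℝ) (Set.Ioi 0), gapLength E h / h ∈ Set.Icc (0 : ℝ) 1 := by
    filter_upwards [self_mem_nhdsWithin] with h hh using gapLength_div_mem_Icc E hh
  have hbdd : IsBoundedUnder (· ≤ ·) (nhdsWithin (0 : ℝ) (Set.Ioi 0))
      (fun h => gapLength E h / h) := ⟨1, by simpa using hev.mono fun _ h => h.2⟩
  have hcobdd : IsCoboundedUnder (· ≤ ·) (nhdsWithin (0 : ℝ) (Set.Ioi 0))
      (fun h => gapLength E h / h) :=
    IsBoundedUnder.isCoboundedUnder_le ⟨0, by simpa using hev.mono fun _ h => h.1⟩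
  unfold upperPorosity
  constructor
  · intro H ε hε δ hδ
    -- The gap is extracted for `min ε 1`, so that `1 - min ε 1` is nonnegative.
    have hm : 0 < min ε 1 := lt_min hε one_pos
    have hf : ∃ᶠ h in nhdsWithin (0 : ℝ) (Set.Ioi 0), 1 - min ε 1 < gapLength E h / h :=
      frequently_lt_of_lt_limsup hcobdd (by rw [H]; linarith)
    obtain ⟨h, hlt, hh, hhδ⟩ := (hf.and_eventually (Ioo_mem_nhdsGT hδ)).exists
    rw [lt_div_iff₀ hh] at hlt
    obtain ⟨l, ⟨a, b, h1, h2, h3, h4, rfl⟩, hl⟩ :=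
      exists_lt_of_lt_csSup ⟨0, zero_mem_gaps E hh⟩ hlt
    have hm1 : min ε 1 ≤ 1 := min_le_right _ _
    have hmε : min ε 1 ≤ ε := min_le_left _ _
    have hb : 0 < b := by nlinarith
    refine ⟨a, b, h1, ?_, hb, by linarith, h4⟩
    nlinarith
  · intro H
    apply le_antisymm
    · exact limsup_le_of_le hcobdd (hev.mono fun _ h => h.2)
    · refine le_of_forall_lt fun c hc => ?_
      obtain ⟨d, hcd, hd⟩ := exists_between hc
      refine hcd.trans_le (le_limsup_of_frequently_le ?_ hbdd)
      rw [(nhdsGT_basis (0 : ℝ)).frequently_iff]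
      intro δ hδ
      obtain ⟨a, b, h1, h2, h3, h4, h5⟩ := H (min (1 - d) 1) (lt_min (by linarith) one_pos) δ hδ
      have hε : min (1 - d) 1 * b ≤ (1 - d) * b :=
        mul_le_mul_of_nonneg_right (min_le_left _ _) h3.le
      have hε' : min (1 - d) 1 * b ≤ 1 * b :=
        mul_le_mul_of_nonneg_right (min_le_right _ _) h3.le
      refine ⟨b, ⟨h3, h4⟩, ?_⟩
      rw [le_div_iff₀ h3]
      have : b - a ≤ gapLength E b :=
        le_csSup ⟨b, fun _ => gaps_le E⟩ ⟨a, b, h1, by linarith, le_rfl, h5, rfl⟩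
      linarith

theorem Ici_notMem_SP : Set.Ici (0 : ℝ) ∉ SP := by
  rintro ⟨-, h⟩
  obtain ⟨a, b, h1, h2, -, -, h5⟩ :=
    (upperPorosity_eq_one_iff _).1 h 1 one_pos 1 one_pos
  have hmem : (a + b) / 2 ∈ Set.Ioo a b ∩ Set.Ici 0 := by
    refine ⟨⟨?_, ?_⟩, ?_⟩
    · linarith
    · linarith
    · rw [Set.mem_Ici]; linarith
  simp [h5] at hmem

theorem mem_SP_of_subset_union_blowUp {A C : Set ℝ} {q : ℝ} (hq : 1 < q) (hA : A ∈ SP)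
    (hC : C ⊆ Set.Ici 0) (hCA : C ⊆ A ∪ blowUp A q) : C ∈ SP := by
  refine ⟨hC, (upperPorosity_eq_one_iff _).2 fun ε hε δ hδ => ?_⟩
  have hq0 : 0 < q := by linarith
  obtain ⟨a, b, h1, h2, h3, h4, h5⟩ :=
    (upperPorosity_eq_one_iff _).1 hA.2 (ε / q ^ 2) (by positivity) δ hδ
  have hgap : ∀ x ∈ A, x ≤ a ∨ b ≤ x := by
    intro x hx
    by_contra! hcon
    have hmem : x ∈ Set.Ioo a b ∩ A := ⟨hcon, hx⟩
    simp [h5] at hmem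
  have hbq : b / q < b := div_lt_self h3 hq
  refine ⟨q * a, b / q, by positivity, ?_, by positivity, by linarith, ?_⟩
  · calc q * a < q * (ε / q ^ 2 * b) := by gcongr
      _ = ε * (b / q) := by field_simp
  · rw [Set.eq_empty_iff_forall_notMem]
    rintro y ⟨⟨hy1, hy2⟩, hyC⟩
    rcases hCA hyC with hy | hy
    · rcases hgap y hy with h | h
      · nlinarith
      · linarith
    · simp only [blowUp, Set.mem_iUnion, Set.mem_Ioo] at hy
      obtain ⟨x, hx, hx1, hx2⟩ := hy
      rcases hgap x hx with h | h
      · nlinarith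
      · have : b / q ≤ q⁻¹ * x := by
          rw [div_eq_inv_mul]; gcongr
        linarith

theorem blowUp_subset_Ici {A : Set ℝ} {q : ℝ} (hq : 0 < q) (hA : A ⊆ Set.Ici 0) :
    blowUp A q ⊆ Set.Ici 0 := by
  intro y hy
  simp only [blowUp, Set.mem_iUnion, Set.mem_Ioo] at hy
  obtain ⟨x, hx, hx1, -⟩ := hy
  exact (mul_nonneg (inv_nonneg.2 hq.le) (hA hx)).trans hx1.le

theorem blowUp_mono {A B : Set ℝ} (q : ℝ) (h : A ⊆ B) : blowUp A q ⊆ blowUp B q :=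
  Set.biUnion_subset_biUnion_left h

theorem stmt14 (I : Set (Set ℝ)) (hI : IsMaximalIdealIn (Set.Ici 0) SP I)
    (q : ℝ) (hq : 1 < q) : ∀ E ∈ I, blowUp E q ∈ I := by
  obtain ⟨⟨hne, hX, -, hun, -⟩, hSP, hmax⟩ := hI
  let J : Set (Set ℝ) := {C | C ⊆ Set.Ici 0 ∧ ∃ A ∈ I, C ⊆ A ∪ blowUp A q}
  have hJSP : J ⊆ SP := by
    rintro C ⟨hC, A, hA, hCA⟩
    exact mem_SP_of_subset_union_blowUp hq (hSP hA) hC hCA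
  have hIJ : I ⊆ J := fun A hA => ⟨hX A hA, A, hA, Set.subset_union_left⟩
  have hJ : IsIdealOn (Set.Ici 0) J := by
    refine ⟨hne.mono hIJ, fun B hB => hB.1, ?_, ?_, fun h => Ici_notMem_SP (hJSP h)⟩
    · rintro B ⟨hB, A, hA, hBA⟩ C hC
      exact ⟨hC.trans hB, A, hA, hC.trans hBA⟩
    · rintro B ⟨hB, A, hA, hBA⟩ C ⟨hC, A', hA', hCA⟩
      refine ⟨Set.union_subset hB hC, A ∪ A', hun A hA A' hA', Set.union_subset ?_ ?_⟩
      · exact hBA.trans (Set.union_subset_union Set.subset_union_left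
          (blowUp_mono q Set.subset_union_left))
      · exact hCA.trans (Set.union_subset_union Set.subset_union_right
          (blowUp_mono q Set.subset_union_right))
  intro E hE
  rw [hmax J hJ hIJ hJSP]
  exact ⟨blowUp_subset_Ici (by linarith) (hX E hE), E, hE, Set.subset_union_right⟩
end

section
/- Let E ⊆ ℝ⁺ be strongly porous at 0. Then ℝ⁺ − E is lower nonporous at 0. -/
/-!
If `E` is strongly porous at 0, then for arbitrarily small `h` there is an interval `(a, b)`
missing `E` inside `(0, h)` of length more than `(1 - ε) h`. This interval lies entirely in the
complement of `E`, so every gap of the complement in `(0, h)` sits inside `[0, a]` or `[b, h]`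
and has length at most `ε h`. Hence `λ(ℝ⁺ \ E, h) / h ≤ ε` for arbitrarily small `h`
(`gapLength_compl_le`), and the lower limit of this nonnegative quotient is 0.
-/

open Filter Set

/-- A gap of `E` in `(0, h)` of length more than `h - t` forces all gaps of the complement
of `E` in `(0, h)` to have length at most `t`. -/
lemma gapLength_compl_le {E : Set ℝ} {h t : ℝ} (ht : 0 ≤ t) (hlt : h - t < gapLength E h)
    (hh : 0 ≤ h) : gapLength (Set.Ici 0 \ E) h ≤ t := by
  obtain ⟨l, ⟨a, b, ha, hab, hb, hE, rfl⟩, hl⟩ := exists_lt_of_lt_csSup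
    (⟨0, 0, 0, le_rfl, le_rfl, hh, by simp, by simp⟩ :
      {l : ℝ | ∃ a b : ℝ, 0 ≤ a ∧ a ≤ b ∧ b ≤ h ∧ Set.Ioo a b ∩ E = ∅ ∧ l = b - a}.Nonempty) hlt
  apply Real.sSup_le _ ht
  rintro l ⟨c, d, hc, hcd, hd, hF, rfl⟩
  by_contra! hgt
  -- Both gaps are too long to be disjoint, and a common point is neither in `E` nor outside it.
  have hlt' : max a c < min b d := by
    apply max_lt <;> apply lt_min <;> linarith
  obtain ⟨x, hx1, hx2⟩ := exists_between hlt'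
  have hxa := (le_max_left a c).trans_lt hx1
  have hxc := (le_max_right a c).trans_lt hx1
  have hxb := hx2.trans_le (min_le_left b d)
  have hxd := hx2.trans_le (min_le_right b d)
  have hxE : x ∉ E := fun hx => (Set.eq_empty_iff_forall_notMem.mp hE x) ⟨⟨hxa, hxb⟩, hx⟩
  exact (Set.eq_empty_iff_forall_notMem.mp hF x) ⟨⟨hxc, hxd⟩, ha.trans hxa.le, hxE⟩

theorem stmt17 (E : Set ℝ) (hE : E ⊆ Set.Ici 0) (hsp : upperPorosity E = 1) :
    lowerPorosity (Set.Ici 0 \ E) = 0 := by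
  have hpos : ∀ᶠ h : ℝ in nhdsWithin (0:ℝ) (Set.Ioi 0), 0 < h := self_mem_nhdsWithin
  have h0 : ∀ F : Set ℝ, ∀ᶠ h : ℝ in nhdsWithin (0:ℝ) (Set.Ioi 0), 0 ≤ gapLength F h / h :=
    fun F => hpos.mono fun h hh => div_nonneg (gapLength_nonneg F h) hh.le
  have h1 : ∀ F : Set ℝ, ∀ᶠ h : ℝ in nhdsWithin (0:ℝ) (Set.Ioi 0), gapLength F h / h ≤ 1 :=
    fun F => hpos.mono fun h hh => div_le_one_of_le₀ (gapLength_le F hh.le) hh.le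
  apply le_antisymm
  · refine le_of_forall_pos_le_add fun ε hε => ?_
    rw [zero_add]
    have hfreq : ∃ᶠ h : ℝ in nhdsWithin (0:ℝ) (Set.Ioi 0), 1 - ε < gapLength E h / h :=
      Filter.frequently_lt_of_lt_limsup
        (Filter.isBoundedUnder_of_eventually_ge (h0 E)).isCoboundedUnder_le
        (by change 1 - ε < upperPorosity E; rw [hsp]; linarith)
    refine Filter.liminf_le_of_frequently_le ?_
      (Filter.isBoundedUnder_of_eventually_ge (h0 _))
    refine (hfreq.and_eventually hpos).mono ?_
    rintro h ⟨hlt, hh⟩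
    rw [lt_div_iff₀ hh] at hlt
    rw [div_le_iff₀ hh]
    exact gapLength_compl_le (by positivity) (by linarith) hh.le
  · exact Filter.le_liminf_of_le
      (Filter.isBoundedUnder_of_eventually_le (h1 _)).isCoboundedUnder_ge (h0 _)
end
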